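/- The third term γ₃(B(4,3)) of the lower central series of B(4,3) is contained in the center of B(4,3). -/

import Mathlib

/-- The free Burnside group `B(4,3)` of exponent 3 on four generators:
the free group on four generators modulo the normal closure of all cubes. -/
abbrev B43 : Type :=
  FreeGroup (Fin 4) ⧸ Subgroup.normalClosure {w : FreeGroup (Fin 4) | ∃ v, w = v ^ 3}

/-!
In a group of exponent 3 every element commutes with its conjugates, so the group is 2-Engel:
`⁅x, ⁅x, y⁆⁆ = 1`. By a theorem of Levi, 2-Engel groups have nilpotency class at most 3. Indeed,
such a group acts by conjugation on the normal closure of any element `z`, which is abelian, and the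
operators `ρ g - 1 = ⁅g, ·⁆` square to zero. Hence they anticommute, and
`ρ ⁅x, y⁆ - 1 = 2 (ρ x - 1) (ρ y - 1)`. Applied to `z`, and combined with `⁅x, y⁻¹⁆ = ⁅x, y⁆⁻¹`,
this says that `⁅x, ⁅y, z⁆⁆` is inverted by every transposition of its entries and that
`⁅⁅x, y⁆, z⁆ = ⁅x, ⁅y, z⁆⁆ ^ 2`. For `t = ⁅w, ⁅x, ⁅y, z⁆⁆⁆`, the first law shows that
`⁅⁅w, x⁆, ⁅y, z⁆⁆ = t` and the second that it equals `t ^ 2`; therefore `t = 1`.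
-/

open scoped commutatorElement IsMulCommutative

section Ring

variable {R : Type*} [Ring R] {a b : R}

theorem mul_mul_self_eq_zero_of_sq_eq_zero (ha : a ^ 2 = 0) (hb : b ^ 2 = 0)
    (hab : ((1 + a) * (1 + b) - 1) ^ 2 = 0) : a * b * a = 0 := by
  -- Modulo `a ^ 2` and `b ^ 2`, the product `a * (a + b + a * b) ^ 2` is `a * b * a * (1 + b)`,
  -- and `1 + b` is invertible with inverse `1 - b`.
  have h : a * b * a * (1 + b) = 0 := by
    linear_combination (norm := noncomm_ring)
      a * hab - ha * (1 + b) * (a + b + a * b) - a * hb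
  linear_combination (norm := noncomm_ring) h * (1 - b) + a * b * a * hb

theorem mul_eq_neg_mul_of_sq_eq_zero (ha : a ^ 2 = 0) (hb : b ^ 2 = 0)
    (hab : ((1 + a) * (1 + b) - 1) ^ 2 = 0) (hba : ((1 + b) * (1 + a) - 1) ^ 2 = 0) :
    a * b = -(b * a) := by
  have haba := mul_mul_self_eq_zero_of_sq_eq_zero ha hb hab
  have hbab := mul_mul_self_eq_zero_of_sq_eq_zero hb ha hba
  linear_combination (norm := noncomm_ring)
    hab - ha * (1 + b) - hb - a * hb - hbab - haba * (1 + b)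

theorem commutator_one_add_of_mul_eq_neg_mul (ha : a ^ 2 = 0) (hb : b ^ 2 = 0)
    (hab : a * b = -(b * a)) :
    (1 + a) * (1 + b) * (1 - a) * (1 - b) = 1 + 2 * (a * b) := by
  have haba : a * b * a = 0 := by
    linear_combination (norm := noncomm_ring) hab * a - b * ha
  -- With `s = a + b`, the left-hand side is `(1 + a * b + s) * (1 + a * b - s)`, and all of
  -- `s ^ 2`, `(a * b) ^ 2`, `s * (a * b)` and `(a * b) * s` vanish.
  linear_combination (norm := noncomm_ring)
    haba * (b - 1) - (1 + 2 * a) * hb - ha * (1 - b) - hab * (1 - b)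

end Ring

variable {G : Type*} [Group G]

/-- A homomorphism `ρ` from a group to a ring acts quadratically if every `ρ g - 1` squares to
zero, as for the conjugation action of a 2-Engel group on an abelian normal subgroup. The target is
the ring rather than its unit group, so that `ρ g - 1` makes sense. -/
def ActsQuadratically {R : Type*} [Ring R] (ρ : G →* R) : Prop :=
  ∀ g, (ρ g - 1) ^ 2 = 0

namespace ActsQuadratically

variable {R : Type*} [Ring R] {ρ : G →* R}

theorem sub_one_mul_sub_one_eq_neg (hρ : ActsQuadratically ρ) (x y : G) :
    (ρ x - 1) * (ρ y - 1) = -((ρ y - 1) * (ρ x - 1)) := by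
  have hmul (g k : G) : ((1 + (ρ g - 1)) * (1 + (ρ k - 1)) - 1) ^ 2 = 0 := by
    simpa only [add_sub_cancel, map_mul] using hρ (g * k)
  exact mul_eq_neg_mul_of_sq_eq_zero (hρ x) (hρ y) (hmul x y) (hmul y x)

theorem map_inv_eq (hρ : ActsQuadratically ρ) (g : G) : ρ g⁻¹ = 1 - (ρ g - 1) := by
  have h : ρ g * (1 - (ρ g - 1)) = 1 := by
    linear_combination (norm := noncomm_ring) -hρ g
  exact left_inv_eq_right_inv (by rw [← map_mul, inv_mul_cancel, map_one]) h

theorem map_commutatorElement_sub_one (hρ : ActsQuadratically ρ) (x y : G) :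
    ρ ⁅x, y⁆ - 1 = 2 * ((ρ x - 1) * (ρ y - 1)) := by
  rw [sub_eq_iff_eq_add', commutatorElement_def, map_mul, map_mul, map_mul, hρ.map_inv_eq,
    hρ.map_inv_eq]
  simpa only [add_sub_cancel] using
    commutator_one_add_of_mul_eq_neg_mul (hρ x) (hρ y) (hρ.sub_one_mul_sub_one_eq_neg x y)

end ActsQuadratically

section Conjugation

variable (A : Subgroup G) [A.Normal] [IsMulCommutative A]

/-- The conjugation action of a group on an abelian normal subgroup `A`, as a representation on the
additive copy of `A`; its operator `ρ g - 1` is the commutator map `⁅g, ·⁆`. -/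
def conjRepresentation : Representation ℤ G (Additive A) :=
  (Representation.ofMulDistribMulAction (ConjAct G) A).comp ConjAct.toConjAct.toMonoidHom

theorem conjRepresentation_sub_one_apply (g : G) (v : Additive A) :
    (((conjRepresentation A g - 1) v).toMul : G) = ⁅g, (v.toMul : G)⁆ := by
  rw [commutatorElement_def, LinearMap.sub_apply, toMul_sub, Subgroup.coe_div, div_eq_mul_inv]
  rfl

theorem conjRepresentation_sub_one_mul_sub_one_apply (x y : G) (v : Additive A) :
    ((((conjRepresentation A x - 1) * (conjRepresentation A y - 1)) v).toMul : G) =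
      ⁅x, ⁅y, (v.toMul : G)⁆⁆ := by
  rw [Module.End.mul_apply, conjRepresentation_sub_one_apply, conjRepresentation_sub_one_apply]

variable {A}

theorem actsQuadratically_conjRepresentation (hA : ∀ (g : G) (a : A), ⁅g, ⁅g, (a : G)⁆⁆ = 1) :
    ActsQuadratically (conjRepresentation A) := by
  intro g
  ext v
  rw [sq, conjRepresentation_sub_one_mul_sub_one_apply, hA]
  rfl

theorem commutatorElement_coe_eq_inv_swap
    (hA : ∀ (g : G) (a : A), ⁅g, ⁅g, (a : G)⁆⁆ = 1) (x y : G) (z : A) :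
    ⁅x, ⁅y, (z : G)⁆⁆ = ⁅y, ⁅x, (z : G)⁆⁆⁻¹ := by
  have h := (actsQuadratically_conjRepresentation hA).sub_one_mul_sub_one_eq_neg x y
  have hz := congr(($h (.ofMul z)).toMul.val)
  rwa [LinearMap.neg_apply, toMul_neg, Subgroup.coe_inv,
    conjRepresentation_sub_one_mul_sub_one_apply,
    conjRepresentation_sub_one_mul_sub_one_apply] at hz

theorem commutatorElement_left_coe_eq_sq
    (hA : ∀ (g : G) (a : A), ⁅g, ⁅g, (a : G)⁆⁆ = 1) (x y : G) (z : A) :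
    ⁅⁅x, y⁆, (z : G)⁆ = ⁅x, ⁅y, (z : G)⁆⁆ ^ 2 := by
  have h := (actsQuadratically_conjRepresentation hA).map_commutatorElement_sub_one x y
  have hz := congr(($h (.ofMul z)).toMul.val)
  rwa [two_mul, LinearMap.add_apply, toMul_add, Subgroup.coe_mul, ← sq,
    conjRepresentation_sub_one_apply, conjRepresentation_sub_one_mul_sub_one_apply] at hz

end Conjugation

/-- The 2-Engel condition on a group, equivalent to every element commuting with all its
conjugates. -/
def IsTwoEngel (G : Type*) [Group G] : Prop :=
  ∀ x y : G, ⁅x, ⁅x, y⁆⁆ = 1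

theorem commutatorElement_self_eq_one_iff_commute_conj {x y : G} :
    ⁅x, ⁅x, y⁆⁆ = 1 ↔ Commute x (y * x * y⁻¹) := by
  rw [commutatorElement_eq_one_iff_commute]
  refine ⟨fun h ↦ ?_, fun h ↦ ?_⟩
  · have hconj : y * x * y⁻¹ = ⁅x, y⁆⁻¹ * x := by rw [commutatorElement_def]; group
    exact hconj ▸ h.inv_right.mul_right (.refl x)
  · have hcomm : ⁅x, y⁆ = x * (y * x * y⁻¹)⁻¹ := by rw [commutatorElement_def]; group
    exact hcomm ▸ (Commute.refl x).mul_right h.inv_right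

namespace IsTwoEngel

theorem of_pow_three_eq_one (h : ∀ g : G, g ^ 3 = 1) : IsTwoEngel G := by
  have mul_self (g : G) : g * g = g⁻¹ := by
    rw [eq_inv_iff_mul_eq_one, ← pow_three', h]
  have mul_mul_self (g k : G) : g * k * g = k⁻¹ * g⁻¹ * k⁻¹ := by
    rw [← mul_inv_rev, ← mul_inv_rev, eq_inv_iff_mul_eq_one, ← h (g * k), pow_three']
    simp only [mul_assoc]
  intro x y
  rw [commutatorElement_self_eq_one_iff_commute_conj]
  calc x * (y * x * y⁻¹) = x * y * x * y⁻¹ := by group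
    _ = y⁻¹ * x⁻¹ * (y⁻¹ * y⁻¹) := by rw [mul_mul_self, mul_assoc]
    _ = y * y * x⁻¹ * y := by rw [mul_self, mul_self, inv_inv]
    _ = y * (x * y⁻¹ * x) := by rw [mul_mul_self, inv_inv]; group
    _ = y * x * y⁻¹ * x := by group

variable (hG : IsTwoEngel G)
include hG

theorem commute_conj (x y : G) : Commute x (y * x * y⁻¹) :=
  commutatorElement_self_eq_one_iff_commute_conj.mp (hG x y)

theorem isMulCommutative_normalClosure (z : G) :
    IsMulCommutative (Subgroup.normalClosure {z}) := by
  refine Subgroup.isMulCommutative_closure fun a ha b hb ↦ ?_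
  simp only [Group.mem_conjugatesOfSet_iff, Set.mem_singleton_iff, exists_eq_left,
    isConj_iff] at ha hb
  obtain ⟨c, rfl⟩ := ha
  obtain ⟨d, rfl⟩ := hb
  simpa [mul_assoc] using (hG.commute_conj (c * z * c⁻¹) (d * c⁻¹)).eq

theorem commutatorElement_inv_right_eq_inv (x y : G) : ⁅x, y⁻¹⁆ = ⁅x, y⁆⁻¹ := by
  have h : Commute y (x * y⁻¹ * x⁻¹) := by
    simpa [mul_assoc] using (hG.commute_conj y x).inv_right
  rw [commutatorElement_inv, commutatorElement_def, commutatorElement_def, inv_inv, ← h.eq]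
  group

theorem commutatorElement_eq_inv_swap (x y z : G) : ⁅x, ⁅y, z⁆⁆ = ⁅y, ⁅x, z⁆⁆⁻¹ :=
  have := hG.isMulCommutative_normalClosure z
  commutatorElement_coe_eq_inv_swap (fun g a ↦ hG g a) x y
    ⟨z, Subgroup.subset_normalClosure (Set.mem_singleton z)⟩

theorem commutatorElement_rotate (x y z : G) : ⁅x, ⁅y, z⁆⁆ = ⁅y, ⁅z, x⁆⁆ := by
  rw [hG.commutatorElement_eq_inv_swap, ← hG.commutatorElement_inv_right_eq_inv,
    commutatorElement_inv]

theorem commutatorElement_left_eq_sq (x y z : G) : ⁅⁅x, y⁆, z⁆ = ⁅x, ⁅y, z⁆⁆ ^ 2 :=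
  have := hG.isMulCommutative_normalClosure z
  commutatorElement_left_coe_eq_sq (fun g a ↦ hG g a) x y
    ⟨z, Subgroup.subset_normalClosure (Set.mem_singleton z)⟩

theorem commutatorElement_weight_four_eq_one (w x y z : G) : ⁅w, ⁅x, ⁅y, z⁆⁆⁆ = 1 := by
  have h_alternating : ⁅⁅w, x⁆, ⁅y, z⁆⁆ = ⁅w, ⁅x, ⁅y, z⁆⁆⁆ :=
    calc ⁅⁅w, x⁆, ⁅y, z⁆⁆ = ⁅y, ⁅z, ⁅w, x⁆⁆⁆ := hG.commutatorElement_rotate _ _ _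
      _ = ⁅y, ⁅w, ⁅x, z⁆⁆⁆ := by rw [hG.commutatorElement_rotate z]
      _ = ⁅w, ⁅y, ⁅x, z⁆⁆⁆⁻¹ := hG.commutatorElement_eq_inv_swap _ _ _
      _ = ⁅w, ⁅x, ⁅y, z⁆⁆⁆ := by
        rw [hG.commutatorElement_eq_inv_swap x, hG.commutatorElement_inv_right_eq_inv]
  have h_sq := hG.commutatorElement_left_eq_sq w x ⁅y, z⁆
  rwa [h_alternating, sq, left_eq_mul] at h_sq

end IsTwoEngel

theorem lowerCentralSeries_two_le_center_of_commutatorElement_mem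
    (h : ∀ x y z : G, ⁅⁅x, y⁆, z⁆ ∈ Subgroup.center G) :
    (⊤ : Subgroup G).lowerCentralSeries 2 ≤ Subgroup.center G := by
  have h₂ : ⁅(⊤ : Subgroup G), ⊤⁆ ≤ Subgroup.upperCentralSeries G 2 := by
    refine Subgroup.commutator_le.mpr fun x _ y _ ↦ ?_
    rw [Subgroup.mem_upperCentralSeries_succ_iff, Subgroup.upperCentralSeries_one]
    exact h x y
  calc (⊤ : Subgroup G).lowerCentralSeries 2 = ⁅⁅(⊤ : Subgroup G), ⊤⁆, ⊤⁆ := rfl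
    _ ≤ ⁅Subgroup.upperCentralSeries G 2, ⊤⁆ := Subgroup.commutator_mono h₂ le_rfl
    _ ≤ Subgroup.upperCentralSeries G 1 := Subgroup.commutator_upperCentralSeries_top_le G 1
    _ = Subgroup.center G := Subgroup.upperCentralSeries_one G

theorem gamma3_le_center_general (hG : IsTwoEngel G) :
    (⊤ : Subgroup G).lowerCentralSeries 2 ≤ Subgroup.center G := by
  refine lowerCentralSeries_two_le_center_of_commutatorElement_mem fun x y z ↦ ?_
  refine Subgroup.mem_center_iff.mpr fun w ↦ commutatorElement_eq_one_iff_mul_comm.mp ?_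
  rw [← commutatorElement_inv z, hG.commutatorElement_inv_right_eq_inv,
    hG.commutatorElement_weight_four_eq_one, inv_one]

theorem quotient_normalClosure_pow_eq_one (n : ℕ)
    (g : G ⧸ Subgroup.normalClosure {w : G | ∃ v, w = v ^ n}) : g ^ n = 1 := by
  obtain ⟨v, rfl⟩ := QuotientGroup.mk_surjective g
  rw [← QuotientGroup.mk_pow, QuotientGroup.eq_one_iff]
  exact Subgroup.subset_normalClosure ⟨v, rfl⟩

/-- The third term `γ₃(B(4,3)) = [[G,G],G]` of the lower central series of `B(4,3)`
(Mathlib: `lowerCentralSeries B43 2`) is contained in the center of `B(4,3)`. -/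
theorem gamma3_le_center : (⊤ : Subgroup B43).lowerCentralSeries 2 ≤ Subgroup.center B43 :=
  gamma3_le_center_general (.of_pow_three_eq_one (quotient_normalClosure_pow_eq_one 3))
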